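/- Let N ≥ 1, d, τ > 0, let F : ℝ² → ℝ and H : ℝ → ℝ be continuous, and let u, v : ℝᴺ × ℝ → ℝ be such that u and v are twice continuously differentiable in the space variable and once continuously differentiable in time (with all these derivatives jointly continuous), v is bounded, and H∘u is bounded. Suppose for all (x, t) ∈ ℝᴺ × ℝ: ∂ₜu(x,t) = dΔu(x,t) + F(u(x,t), v(x,t)) and ∂ₜv(x,t) = dΔv(x,t) + (1/τ)(H(u(x,t)) − v(x,t)). Then for every (x, t), v(x,t) = ∫_{−∞}^{t} ∫_{ℝᴺ} (4πd(t−s))^{−N/2} exp(−‖x−y‖²/(4d(t−s))) · (1/τ) e^{−(t−s)/τ} H(u(y,s)) dy ds; consequently u is an entire solution of the nonlocal delay equation ∂ₜu = dΔu + F(u, g_w ∗∗ H(u)) on ℝᴺ × ℝ with the weak kernel g_w(t) = (1/τ)e^{−t/τ}. -/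

import Mathlib

open Set MeasureTheory

/-- The Laplacian of `f` at `x`: the trace of the second derivative. -/
noncomputable def Lap {n : ℕ} (f : EuclideanSpace ℝ (Fin n) → ℝ)
    (x : EuclideanSpace ℝ (Fin n)) : ℝ :=
  ∑ i : Fin n, iteratedFDeriv ℝ 2 f x ![EuclideanSpace.single i (1 : ℝ), EuclideanSpace.single i 1]

/-- The heat kernel of ∂ₜ − dΔ on ℝᴺ. -/
noncomputable def heatKer (N : ℕ) (d t : ℝ) (x y : EuclideanSpace ℝ (Fin N)) : ℝ :=
  (4 * Real.pi * d * t) ^ (-(N : ℝ) / 2) * Real.exp (-‖x - y‖ ^ 2 / (4 * d * t))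

open scoped Topology

section HeatKernel

variable {N : ℕ}

theorem ContDiff.fderiv_apply_const {f : EuclideanSpace ℝ (Fin N) → ℝ} (hf : ContDiff ℝ 2 f)
    (e : EuclideanSpace ℝ (Fin N)) : ContDiff ℝ 1 (fun y => fderiv ℝ f y e) :=
  (hf.fderiv_right (m := 1) (by norm_num)).clm_apply contDiff_const

theorem Lap_eq_sum_fderiv {f : EuclideanSpace ℝ (Fin N) → ℝ} (hf : ContDiff ℝ 2 f)
    (x : EuclideanSpace ℝ (Fin N)) :
    Lap f x = ∑ i : Fin N, fderiv ℝ (fun y => fderiv ℝ f y (EuclideanSpace.single i 1)) x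
      (EuclideanSpace.single i 1) := by
  unfold Lap
  refine Finset.sum_congr rfl fun i _ => ?_
  have hd : DifferentiableAt ℝ (fderiv ℝ f) x :=
    (hf.fderiv_right (m := 1) (by norm_num)).differentiable (by norm_num) x
  rw [iteratedFDeriv_two_apply, fderiv_clm_apply hd (differentiableAt_const _)]
  simp

theorem integral_mul_fderiv_fderiv_eq {f g : EuclideanSpace ℝ (Fin N) → ℝ}
    (hf : ContDiff ℝ 2 f) (hg : ContDiff ℝ 2 g) (hgc : HasCompactSupport g)
    (e : EuclideanSpace ℝ (Fin N)) :
    ∫ y, g y * fderiv ℝ (fun z => fderiv ℝ f z e) y e =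
      ∫ y, fderiv ℝ (fun z => fderiv ℝ g z e) y e * f y := by
  have hf1 := hf.fderiv_apply_const e
  have hg1 := hg.fderiv_apply_const e
  have hf2 : Continuous (fun y => fderiv ℝ (fun z => fderiv ℝ f z e) y e) :=
    (hf1.continuous_fderiv (by norm_num)).clm_apply continuous_const
  have hg2 : Continuous (fun y => fderiv ℝ (fun z => fderiv ℝ g z e) y e) :=
    (hg1.continuous_fderiv (by norm_num)).clm_apply continuous_const
  have hgc1 : HasCompactSupport (fun y => fderiv ℝ g y e) := hgc.fderiv_apply ℝ e
  have hgc2 : HasCompactSupport (fun y => fderiv ℝ (fun z => fderiv ℝ g z e) y e) :=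
    hgc1.fderiv_apply ℝ e
  rw [integral_mul_fderiv_eq_neg_fderiv_mul_of_integrable (μ := volume) (f := g)
    (g := fun z => fderiv ℝ f z e),
    integral_mul_fderiv_eq_neg_fderiv_mul_of_integrable (μ := volume)
    (f := fun z => fderiv ℝ g z e) (g := f), neg_neg]
  · exact (hg2.mul hf.continuous).integrable_of_hasCompactSupport hgc2.mul_right
  · exact (hg1.continuous.mul hf1.continuous).integrable_of_hasCompactSupport hgc1.mul_right
  · exact (hg1.continuous.mul hf.continuous).integrable_of_hasCompactSupport hgc1.mul_right
  · exact fun y _ => hg1.differentiable (by norm_num) y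
  · exact fun y _ => hf.differentiable (by norm_num) y
  · exact (hg1.continuous.mul hf1.continuous).integrable_of_hasCompactSupport hgc1.mul_right
  · exact (hg.continuous.mul hf2).integrable_of_hasCompactSupport hgc.mul_right
  · exact (hg.continuous.mul hf1.continuous).integrable_of_hasCompactSupport hgc.mul_right
  · exact fun y _ => hg.differentiable (by norm_num) y
  · exact fun y _ => hf1.differentiable (by norm_num) y

theorem continuous_Lap {f : EuclideanSpace ℝ (Fin N) → ℝ} (hf : ContDiff ℝ 2 f) :
    Continuous (Lap f) := by
  rw [funext (Lap_eq_sum_fderiv hf)]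
  exact continuous_finsetSum _ fun i _ =>
    ((hf.fderiv_apply_const _).continuous_fderiv (by norm_num)).clm_apply continuous_const

theorem hasCompactSupport_Lap {f : EuclideanSpace ℝ (Fin N) → ℝ} (hf : HasCompactSupport f) :
    HasCompactSupport (Lap f) := by
  refine hf.mono' fun y hy => ?_
  by_contra h
  refine hy ?_
  have : iteratedFDeriv ℝ 2 f y = 0 :=
    image_eq_zero_of_notMem_tsupport fun h' => h (tsupport_iteratedFDeriv_subset (𝕜 := ℝ) 2 h')
  simp [Lap, this]

/-- Green's identity against a compactly supported test function. -/
theorem integral_mul_Lap_eq {f g : EuclideanSpace ℝ (Fin N) → ℝ}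
    (hf : ContDiff ℝ 2 f) (hg : ContDiff ℝ 2 g) (hgc : HasCompactSupport g) :
    ∫ y, g y * Lap f y = ∫ y, Lap g y * f y := by
  simp_rw [Lap_eq_sum_fderiv hf, Lap_eq_sum_fderiv hg, Finset.mul_sum, Finset.sum_mul]
  rw [integral_finsetSum, integral_finsetSum]
  · exact Finset.sum_congr rfl fun i _ => integral_mul_fderiv_fderiv_eq hf hg hgc _
  · intro i _
    exact ((((hg.fderiv_apply_const _).continuous_fderiv (by norm_num)).clm_apply
      continuous_const).mul hf.continuous).integrable_of_hasCompactSupport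
      (HasCompactSupport.mul_right ((hgc.fderiv_apply ℝ _).fderiv_apply ℝ _))
  · intro i _
    exact (hg.continuous.mul (((hf.fderiv_apply_const _).continuous_fderiv
      (by norm_num)).clm_apply continuous_const)).integrable_of_hasCompactSupport hgc.mul_right

theorem Lap_mul {f g : EuclideanSpace ℝ (Fin N) → ℝ}
    (hf : ContDiff ℝ 2 f) (hg : ContDiff ℝ 2 g) (x : EuclideanSpace ℝ (Fin N)) :
    Lap (fun y => f y * g y) x = f x * Lap g x + g x * Lap f x +
      2 * ∑ i : Fin N, fderiv ℝ f x (EuclideanSpace.single i 1) *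
        fderiv ℝ g x (EuclideanSpace.single i 1) := by
  rw [Lap_eq_sum_fderiv (hf.mul hg), Lap_eq_sum_fderiv hf, Lap_eq_sum_fderiv hg, Finset.mul_sum,
    Finset.mul_sum, Finset.mul_sum, ← Finset.sum_add_distrib, ← Finset.sum_add_distrib]
  refine Finset.sum_congr rfl fun i _ => ?_
  set e : EuclideanSpace ℝ (Fin N) := EuclideanSpace.single i 1
  have hfd := hf.differentiable (by norm_num)
  have hgd := hg.differentiable (by norm_num)
  have hfd1 := (hf.fderiv_apply_const e).differentiable (by norm_num)
  have hgd1 := (hg.fderiv_apply_const e).differentiable (by norm_num)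
  have h1 : (fun y => fderiv ℝ (fun y => f y * g y) y e) =
      fun y => f y * fderiv ℝ g y e + g y * fderiv ℝ f y e := by
    funext y
    rw [fderiv_fun_mul (hfd y) (hgd y)]
    simp
  rw [h1, fderiv_fun_add ((hfd x).fun_mul (hgd1 x)) ((hgd x).fun_mul (hfd1 x)),
    fderiv_fun_mul (hfd x) (hgd1 x), fderiv_fun_mul (hgd x) (hfd1 x)]
  simp only [_root_.add_apply, _root_.smul_apply, smul_eq_mul]
  ring

theorem contDiff_heatKer (d σ : ℝ) (x : EuclideanSpace ℝ (Fin N)) :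
    ContDiff ℝ 2 (heatKer N d σ x) := by
  unfold heatKer
  exact contDiff_const.mul
    ((((contDiff_const.sub contDiff_id).norm_sq ℝ).neg.div_const _).exp)

theorem fderiv_heatKer_apply {d σ : ℝ} (hd : 0 < d) (hσ : 0 < σ)
    (x y e : EuclideanSpace ℝ (Fin N)) :
    fderiv ℝ (heatKer N d σ x) y e = inner ℝ (x - y) e / (2 * d * σ) * heatKer N d σ x y := by
  have h1 : HasFDerivAt (fun z : EuclideanSpace ℝ (Fin N) => x - z)
      (-ContinuousLinearMap.id ℝ (EuclideanSpace ℝ (Fin N))) y := (hasFDerivAt_id y).const_sub x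
  have h2 := ((h1.norm_sq.neg.mul_const (4 * d * σ)⁻¹).exp).const_mul
    ((4 * Real.pi * d * σ) ^ (-(N : ℝ) / 2))
  have h3 : heatKer N d σ x = fun z => (4 * Real.pi * d * σ) ^ (-(N : ℝ) / 2) *
      Real.exp (-‖x - z‖ ^ 2 * (4 * d * σ)⁻¹) := by
    funext z; simp only [heatKer, div_eq_mul_inv]
  rw [h3]
  erw [h2.fderiv]
  simp [inner_sub_left]
  field_simp
  ring

theorem fderiv_fderiv_heatKer_apply {d σ : ℝ} (hd : 0 < d) (hσ : 0 < σ)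
    (x y e : EuclideanSpace ℝ (Fin N)) :
    fderiv ℝ (fun z => fderiv ℝ (heatKer N d σ x) z e) y e =
      ((inner ℝ (x - y) e / (2 * d * σ)) ^ 2 - ‖e‖ ^ 2 / (2 * d * σ)) * heatKer N d σ x y := by
  simp_rw [fderiv_heatKer_apply hd hσ]
  have h1 : HasFDerivAt (fun z : EuclideanSpace ℝ (Fin N) => x - z)
      (-ContinuousLinearMap.id ℝ (EuclideanSpace ℝ (Fin N))) y := (hasFDerivAt_id y).const_sub x
  have h2 := (h1.inner ℝ (hasFDerivAt_const e y)).mul_const (2 * d * σ)⁻¹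
  have h3 := ((contDiff_heatKer d σ x).differentiable (by norm_num) y).hasFDerivAt
  simp only [div_eq_mul_inv]
  erw [(h2.mul h3).fderiv]
  simp [fderiv_heatKer_apply hd hσ]
  field_simp
  ring

theorem Lap_heatKer {d σ : ℝ} (hd : 0 < d) (hσ : 0 < σ) (x y : EuclideanSpace ℝ (Fin N)) :
    Lap (heatKer N d σ x) y =
      (‖x - y‖ ^ 2 / (2 * d * σ) ^ 2 - N / (2 * d * σ)) * heatKer N d σ x y := by
  rw [Lap_eq_sum_fderiv (contDiff_heatKer d σ x)]
  simp_rw [fderiv_fderiv_heatKer_apply hd hσ, ← Finset.sum_mul]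
  congr 1
  rw [EuclideanSpace.norm_sq_eq]
  simp [EuclideanSpace.inner_single_right, div_pow, ← Finset.sum_div, Finset.sum_sub_distrib]
  rw [div_eq_mul_inv, mul_inv, mul_inv]
  ring

/-- The heat kernel solves the heat equation. -/
theorem hasDerivAt_heatKer {d σ : ℝ} (hd : 0 < d) (hσ : 0 < σ) (x y : EuclideanSpace ℝ (Fin N)) :
    HasDerivAt (fun r => heatKer N d r x y) (d * Lap (heatKer N d σ x) y) σ := by
  have hp : 0 < 4 * Real.pi * d * σ := by positivity
  have h1 : HasDerivAt (fun r : ℝ => 4 * Real.pi * d * r) (4 * Real.pi * d) σ := by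
    simpa using (hasDerivAt_id σ).const_mul (4 * Real.pi * d)
  have h2 : HasDerivAt (fun r : ℝ => 4 * d * r) (4 * d) σ := by
    simpa using (hasDerivAt_id σ).const_mul (4 * d)
  have h3 := (h1.rpow_const (p := -(N : ℝ) / 2) (Or.inl hp.ne')).mul
    (((hasDerivAt_const σ (-‖x - y‖ ^ 2)).div h2 (by positivity)).exp)
  refine h3.congr_deriv ?_
  rw [Lap_heatKer hd hσ, heatKer, Real.rpow_sub_one hp.ne']
  simp
  field_simp
  ring

theorem continuousOn_heatKer {d : ℝ} (hd : 0 < d) (x : EuclideanSpace ℝ (Fin N)) :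
    ContinuousOn (fun p : EuclideanSpace ℝ (Fin N) × ℝ => heatKer N d p.2 x p.1)
      {p | 0 < p.2} := by
  unfold heatKer
  refine ContinuousOn.mul (ContinuousOn.rpow_const (by fun_prop) fun p hp => Or.inl ?_)
    (ContinuousOn.rexp (ContinuousOn.div (by fun_prop) (by fun_prop) fun p hp => ?_))
  all_goals
    have : 0 < p.2 := hp
    positivity

theorem continuousOn_Lap_heatKer {d : ℝ} (hd : 0 < d) (x : EuclideanSpace ℝ (Fin N)) :
    ContinuousOn (fun p : EuclideanSpace ℝ (Fin N) × ℝ => Lap (heatKer N d p.2 x) p.1)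
      {p | 0 < p.2} := by
  refine ContinuousOn.congr (f := fun p : EuclideanSpace ℝ (Fin N) × ℝ =>
    (‖x - p.1‖ ^ 2 / (2 * d * p.2) ^ 2 - N / (2 * d * p.2)) * heatKer N d p.2 x p.1) ?_
    fun p hp => Lap_heatKer hd hp x p.1
  refine ContinuousOn.mul (ContinuousOn.sub (ContinuousOn.div (by fun_prop) (by fun_prop) ?_)
    (ContinuousOn.div (by fun_prop) (by fun_prop) ?_)) (continuousOn_heatKer hd x)
  all_goals
    intro p hp
    have : 0 < p.2 := hp
    positivity

theorem Lap_comp_smul {f : EuclideanSpace ℝ (Fin N) → ℝ} (hf : ContDiff ℝ 2 f) (c : ℝ)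
    (x : EuclideanSpace ℝ (Fin N)) : Lap (fun y => f (c • y)) x = c ^ 2 * Lap f (c • x) := by
  simp [Lap, iteratedFDeriv_comp_const_smul c hf, Finset.mul_sum]

/-- A sequence of cutoffs exhausting the space, with uniformly bounded derivatives. -/
theorem exists_cutoff_seq (N : ℕ) :
    ∃ ψ : ℕ → EuclideanSpace ℝ (Fin N) → ℝ, ∃ C : ℝ, 0 ≤ C ∧ (∀ n, ContDiff ℝ 2 (ψ n)) ∧
      (∀ n, HasCompactSupport (ψ n)) ∧ (∀ n y, |ψ n y| ≤ 1) ∧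
      (∀ n y, ‖fderiv ℝ (ψ n) y‖ ≤ C) ∧ (∀ n y, |Lap (ψ n) y| ≤ C) ∧
      ∀ y, ∀ᶠ n in Filter.atTop, ψ n y = 1 ∧ fderiv ℝ (ψ n) y = 0 ∧ Lap (ψ n) y = 0 := by
  let f : ContDiffBump (0 : EuclideanSpace ℝ (Fin N)) := ⟨1, 2, one_pos, one_lt_two⟩
  have hf : ContDiff ℝ 2 f := f.contDiff
  obtain ⟨C₁, hC₁⟩ := (hf.continuous_fderiv (by norm_num)).bounded_above_of_compact_support
    (f.hasCompactSupport.fderiv ℝ)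
  obtain ⟨C₂, hC₂⟩ := (continuous_Lap hf).bounded_above_of_compact_support
    (hasCompactSupport_Lap f.hasCompactSupport)
  have hc : ∀ n : ℕ, 0 < ((n : ℝ) + 1)⁻¹ := fun n => by positivity
  have hc1 : ∀ n : ℕ, ((n : ℝ) + 1)⁻¹ ≤ 1 := fun n => inv_le_one_of_one_le₀ (by simp)
  refine ⟨fun n y => f (((n : ℝ) + 1)⁻¹ • y), max C₁ C₂,
    ((norm_nonneg _).trans (hC₁ 0)).trans (le_max_left _ _),
    fun n => hf.comp (contDiff_const_smul _),
    fun n => f.hasCompactSupport.comp_smul (hc n).ne', fun n y => ?_, fun n y => ?_,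
    fun n y => ?_, fun y => ?_⟩
  · rw [abs_of_nonneg f.nonneg]
    exact f.le_one
  · rw [fderiv_comp_smul, norm_smul, Real.norm_of_nonneg (hc n).le]
    calc _ ≤ 1 * ‖fderiv ℝ f (((n : ℝ) + 1)⁻¹ • y)‖ := by gcongr; exact hc1 n
      _ ≤ _ := by rw [one_mul]; exact (hC₁ _).trans (le_max_left _ _)
  · rw [Lap_comp_smul hf, abs_mul, abs_of_nonneg (sq_nonneg _)]
    calc _ ≤ 1 * |Lap f (((n : ℝ) + 1)⁻¹ • y)| := by
          gcongr; exact pow_le_one₀ (hc n).le (hc1 n)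
      _ ≤ _ := by rw [one_mul]; exact (hC₂ _).trans (le_max_right _ _)
  · obtain ⟨n₀, hn₀⟩ := exists_nat_gt ‖y‖
    filter_upwards [Filter.eventually_ge_atTop n₀] with n hn
    have hmem : ((n : ℝ) + 1)⁻¹ • y ∈ Metric.ball (0 : EuclideanSpace ℝ (Fin N)) 1 := by
      have : (n₀ : ℝ) ≤ n := by exact_mod_cast hn
      rw [mem_ball_zero_iff, norm_smul, Real.norm_of_nonneg (hc n).le,
        inv_mul_lt_iff₀ (by positivity)]
      linarith
    have hev : (f : EuclideanSpace ℝ (Fin N) → ℝ) =ᶠ[𝓝 (((n : ℝ) + 1)⁻¹ • y)] fun _ => 1 :=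
      f.eventuallyEq_one_of_mem_ball hmem
    refine ⟨hev.eq_of_nhds, ?_, ?_⟩
    · rw [fderiv_comp_smul, hev.fderiv_eq]
      simp
    · have h2 : iteratedFDeriv ℝ 2 f (((n : ℝ) + 1)⁻¹ • y) = 0 := by
        rw [(hev.iteratedFDeriv ℝ 2).eq_of_nhds, iteratedFDeriv_const_of_ne (by norm_num)]
        rfl
      rw [Lap_comp_smul hf]
      simp [Lap, h2]

theorem heatKer_nonneg {d σ : ℝ} (hd : 0 < d) (hσ : 0 < σ) (x y : EuclideanSpace ℝ (Fin N)) :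
    0 ≤ heatKer N d σ x y := by
  unfold heatKer
  positivity

theorem integrable_exp_neg_mul_sq_norm {c : ℝ} (hc : 0 < c) :
    Integrable (fun z : EuclideanSpace ℝ (Fin N) => Real.exp (-c * ‖z‖ ^ 2)) := by
  refine Integrable.of_integral_ne_zero ?_
  rw [GaussianFourier.integral_rexp_neg_mul_sq_norm hc]
  positivity

theorem integrable_one_add_norm_mul_exp {c : ℝ} (hc : 0 < c) :
    Integrable (fun z : EuclideanSpace ℝ (Fin N) => (1 + ‖z‖) * Real.exp (-c * ‖z‖ ^ 2)) := by
  refine ((integrable_exp_neg_mul_sq_norm (N := N) (half_pos hc)).const_mul (2 + 1 / c)).mono'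
    (by fun_prop) (Filter.Eventually.of_forall fun z => ?_)
  rw [Real.norm_of_nonneg (by positivity)]
  have h1 : Real.exp (-c * ‖z‖ ^ 2) =
      Real.exp (-(c / 2 * ‖z‖ ^ 2)) * Real.exp (-(c / 2) * ‖z‖ ^ 2) := by
    rw [← Real.exp_add]
    ring_nf
  have h2 : (1 + ‖z‖) ≤ (2 + 1 / c) * Real.exp (c / 2 * ‖z‖ ^ 2) := by
    calc 1 + ‖z‖ ≤ (2 + 1 / c) * (c / 2 * ‖z‖ ^ 2 + 1) := by
          have : (2 + 1 / c) * (c / 2 * ‖z‖ ^ 2 + 1) =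
              c * ‖z‖ ^ 2 + ‖z‖ ^ 2 / 2 + 2 + 1 / c := by
            field_simp
            ring
          have : 0 ≤ c * ‖z‖ ^ 2 := by positivity
          have : 0 < 1 / c := by positivity
          nlinarith [sq_nonneg (‖z‖ - 1)]
      _ ≤ _ := by gcongr; exact Real.add_one_le_exp _
  calc (1 + ‖z‖) * Real.exp (-c * ‖z‖ ^ 2)
      ≤ ((2 + 1 / c) * Real.exp (c / 2 * ‖z‖ ^ 2)) * Real.exp (-c * ‖z‖ ^ 2) := by gcongr
    _ = _ := by
      rw [h1, Real.exp_neg]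
      field_simp

/-- A common integrable majorant of the heat kernel and its gradient, on compact time ranges. -/
theorem exists_integrable_heatKer_mul_le {d α β : ℝ} (hd : 0 < d) (hα : 0 < α) (hαβ : α ≤ β)
    (x : EuclideanSpace ℝ (Fin N)) :
    ∃ D : EuclideanSpace ℝ (Fin N) → ℝ, Integrable D ∧
      ∀ σ ∈ Icc α β, ∀ y, heatKer N d σ x y * (1 + ‖x - y‖) ≤ D y := by
  have hβ : 0 < β := hα.trans_le hαβ
  refine ⟨fun y => (4 * Real.pi * d * α) ^ (-(N : ℝ) / 2) *
    ((1 + ‖x - y‖) * Real.exp (-(1 / (4 * d * β)) * ‖x - y‖ ^ 2)),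
    ((integrable_one_add_norm_mul_exp (by positivity)).comp_sub_left x).const_mul _,
    fun σ hσ y => ?_⟩
  have hσ0 : 0 < σ := hα.trans_le hσ.1
  have h1 : (4 * Real.pi * d * σ) ^ (-(N : ℝ) / 2) ≤ (4 * Real.pi * d * α) ^ (-(N : ℝ) / 2) := by
    refine Real.rpow_le_rpow_of_nonpos (by positivity) (by have := hσ.1; gcongr) ?_
    have : (0 : ℝ) ≤ N := by positivity
    linarith
  have h2 : Real.exp (-‖x - y‖ ^ 2 / (4 * d * σ)) ≤
      Real.exp (-(1 / (4 * d * β)) * ‖x - y‖ ^ 2) := by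
    rw [Real.exp_le_exp, neg_div, neg_mul, neg_le_neg_iff, one_div_mul_eq_div]
    have := hσ.2
    gcongr
  refine le_of_le_of_eq ?_ (mul_right_comm _ _ _ |>.trans (mul_assoc _ _ _))
  unfold heatKer
  gcongr

theorem integrable_heatKer {d σ : ℝ} (hd : 0 < d) (hσ : 0 < σ) (x : EuclideanSpace ℝ (Fin N)) :
    Integrable (heatKer N d σ x) := by
  obtain ⟨D, hD, hle⟩ := exists_integrable_heatKer_mul_le hd hσ le_rfl x
  refine hD.mono' (contDiff_heatKer d σ x).continuous.aestronglyMeasurable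
    (Filter.Eventually.of_forall fun y => ?_)
  have h0 := heatKer_nonneg hd hσ x y
  rw [Real.norm_of_nonneg h0]
  refine le_trans ?_ (hle σ ⟨le_rfl, le_rfl⟩ y)
  nlinarith [mul_nonneg h0 (norm_nonneg (x - y))]

theorem integral_heatKer {d σ : ℝ} (hd : 0 < d) (hσ : 0 < σ) (x : EuclideanSpace ℝ (Fin N)) :
    ∫ y, heatKer N d σ x y = 1 := by
  have h1 : ∀ y, heatKer N d σ x y = (fun z => (4 * Real.pi * d * σ) ^ (-(N : ℝ) / 2) *
      Real.exp (-(1 / (4 * d * σ)) * ‖z‖ ^ 2)) (x - y) := fun y => by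
    simp only [heatKer, neg_div, neg_mul, one_div_mul_eq_div]
  simp_rw [h1]
  rw [integral_sub_left_eq_self (fun z : EuclideanSpace ℝ (Fin N) =>
    (4 * Real.pi * d * σ) ^ (-(N : ℝ) / 2) * Real.exp (-(1 / (4 * d * σ)) * ‖z‖ ^ 2)),
    integral_const_mul, GaussianFourier.integral_rexp_neg_mul_sq_norm (by positivity),
    finrank_euclideanSpace_fin, neg_div, Real.rpow_neg (by positivity)]
  have : Real.pi / (1 / (4 * d * σ)) = 4 * Real.pi * d * σ := by field_simp
  rw [this]
  exact inv_mul_cancel₀ (by positivity)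

/-- Parabolic scaling of heat averages to unit time. -/
theorem integral_heatKer_mul {d σ : ℝ} (hd : 0 < d) (hσ : 0 < σ) (x : EuclideanSpace ℝ (Fin N))
    (f : EuclideanSpace ℝ (Fin N) → ℝ) :
    ∫ y, heatKer N d σ x y * f y = ∫ z, heatKer N d 1 0 z * f (x + √σ • z) := by
  have hs : 0 < √σ := Real.sqrt_pos.2 hσ
  have hN : √σ ^ N = σ ^ ((N : ℝ) / 2) := by
    rw [Real.sqrt_eq_rpow, ← Real.rpow_natCast, ← Real.rpow_mul hσ.le]
    ring_nf
  have h1 : ∀ z, heatKer N d 1 0 z * f (x + √σ • z) =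
      √σ ^ N * (fun y => heatKer N d σ x (x + y) * f (x + y)) (√σ • z) := fun z => by
    have h2 : -‖x - (x + √σ • z)‖ ^ 2 / (4 * d * σ) = -‖0 - z‖ ^ 2 / (4 * d * 1) := by
      rw [sub_add_cancel_left, norm_neg, norm_smul, zero_sub, norm_neg, mul_pow,
        Real.norm_of_nonneg hs.le, Real.sq_sqrt hσ.le]
      field_simp
    have h3 : (4 * Real.pi * d * σ) ^ (-(N : ℝ) / 2) =
        (4 * Real.pi * d * 1) ^ (-(N : ℝ) / 2) * σ ^ (-(N : ℝ) / 2) := by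
      rw [mul_one, Real.mul_rpow (by positivity) hσ.le]
    simp only [heatKer]
    rw [h2, h3, hN, neg_div, Real.rpow_neg hσ.le]
    field_simp
  simp_rw [h1]
  rw [integral_const_mul, Measure.integral_comp_smul volume
    (fun y => heatKer N d σ x (x + y) * f (x + y)), finrank_euclideanSpace_fin,
    abs_of_nonneg (by positivity), smul_eq_mul, ← mul_assoc, mul_inv_cancel₀ (by positivity),
    one_mul, integral_add_left_eq_self (fun y => heatKer N d σ x y * f y)]

theorem continuous_integral_heatKer_mul {d : ℝ} (hd : 0 < d) (x : EuclideanSpace ℝ (Fin N))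
    (t : ℝ) {f : EuclideanSpace ℝ (Fin N) → ℝ → ℝ}
    (hf : Continuous fun p : EuclideanSpace ℝ (Fin N) × ℝ => f p.1 p.2) {M : ℝ}
    (hM : ∀ y s, |f y s| ≤ M) :
    Continuous fun s => ∫ z, heatKer N d 1 0 z * f (x + √(t - s) • z) s := by
  have hK := (contDiff_heatKer d 1 (0 : EuclideanSpace ℝ (Fin N))).continuous
  refine continuous_of_dominated (bound := fun z => heatKer N d 1 0 z * M) (fun s => ?_)
    (fun s => Filter.Eventually.of_forall fun z => ?_)
    ((integrable_heatKer hd one_pos 0).mul_const M) (Filter.Eventually.of_forall fun z => ?_)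
  · refine (hK.mul (hf.comp (f := fun z => (x + √(t - s) • z, s)) ?_)).aestronglyMeasurable
    fun_prop
  · rw [norm_mul, Real.norm_of_nonneg (heatKer_nonneg hd one_pos 0 z)]
    exact mul_le_mul_of_nonneg_left (hM _ _) (heatKer_nonneg hd one_pos 0 z)
  · refine continuous_const.mul (hf.comp (f := fun s => (x + √(t - s) • z, s)) ?_)
    fun_prop

theorem abs_integral_heatKer_mul_le {d : ℝ} (hd : 0 < d)
    {f : EuclideanSpace ℝ (Fin N) → ℝ} {M : ℝ} (hM : ∀ y, |f y| ≤ M) :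
    |∫ z, heatKer N d 1 0 z * f z| ≤ M := by
  rw [← Real.norm_eq_abs]
  calc ‖∫ z, heatKer N d 1 0 z * f z‖ ≤ ∫ z, heatKer N d 1 0 z * M :=
        norm_integral_le_of_norm_le ((integrable_heatKer hd one_pos 0).mul_const M)
          (Filter.Eventually.of_forall fun z => by
            rw [norm_mul, Real.norm_of_nonneg (heatKer_nonneg hd one_pos 0 z)]
            exact mul_le_mul_of_nonneg_left (hM _) (heatKer_nonneg hd one_pos 0 z))
    _ = M := by rw [integral_mul_const, integral_heatKer hd one_pos, one_mul]

/-- Duhamel's identity for a linear heat equation with damping, localised by a cutoff `ψ`. -/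
theorem integral_cutoff_sub_eq {d τ t a b : ℝ} (hd : 0 < d) (hab : a ≤ b) (hbt : b < t)
    {v h : EuclideanSpace ℝ (Fin N) → ℝ → ℝ}
    (hvt : ∀ x, ContDiff ℝ 1 (v x)) (hvx : ∀ t, ContDiff ℝ 2 (fun y => v y t))
    (hvjc : Continuous (fun p : EuclideanSpace ℝ (Fin N) × ℝ => v p.1 p.2))
    (hvdc : Continuous (fun p : EuclideanSpace ℝ (Fin N) × ℝ => deriv (v p.1) p.2))
    (heq : ∀ x t, deriv (v x) t = d * Lap (fun y => v y t) x + (1 / τ) * (h x t - v x t))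
    {ψ : EuclideanSpace ℝ (Fin N) → ℝ} (hψ : ContDiff ℝ 2 ψ) (hψc : HasCompactSupport ψ)
    (x : EuclideanSpace ℝ (Fin N)) {R : ℝ → ℝ}
    (hR : ∀ s, R s = ∫ y, Real.exp (-(t - s) / τ) *
      (ψ y * heatKer N d (t - s) x y * ((1 / τ) * h y s) + d * v y s *
        (heatKer N d (t - s) x y * Lap ψ y + 2 * ∑ i : Fin N,
          fderiv ℝ ψ y (EuclideanSpace.single i 1) *
            fderiv ℝ (heatKer N d (t - s) x) y (EuclideanSpace.single i 1)))) :
    AEStronglyMeasurable R (volume.restrict (Ioc a b)) ∧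
    (∫ y, ψ y * (heatKer N d (t - b) x y * Real.exp (-(t - b) / τ) * v y b)) -
      ∫ y, ψ y * (heatKer N d (t - a) x y * Real.exp (-(t - a) / τ) * v y a) =
      ∫ s in a..b, R s := by
  set G : ℝ → EuclideanSpace ℝ (Fin N) → ℝ := fun s y => ψ y *
    ((-(d * Lap (heatKer N d (t - s) x) y) * Real.exp (-(t - s) / τ) +
      heatKer N d (t - s) x y * (Real.exp (-(t - s) / τ) * (1 / τ))) * v y s +
      heatKer N d (t - s) x y * Real.exp (-(t - s) / τ) * deriv (v y) s) with hG
  have hK2 : ∀ s, ContDiff ℝ 2 (heatKer N d (t - s) x) := fun s => contDiff_heatKer d (t - s) x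
  have hcont : ∀ s, Continuous fun y => heatKer N d (t - s) x y := fun s => (hK2 s).continuous
  have hGc : ContinuousOn (Function.uncurry G) (Icc a b ×ˢ univ) := by
    have hmap : MapsTo (fun p : ℝ × EuclideanSpace ℝ (Fin N) => (p.2, t - p.1))
        (Icc a b ×ˢ univ) {p | 0 < p.2} := fun p hp => by
      have := hp.1.2
      simp only [mem_ofPred_eq]
      linarith
    have hK := (continuousOn_heatKer (N := N) hd x).comp (by fun_prop) hmap
    have hL := (continuousOn_Lap_heatKer (N := N) hd x).comp (by fun_prop) hmap
    have hv1 : Continuous fun p : ℝ × EuclideanSpace ℝ (Fin N) => v p.2 p.1 :=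
      hvjc.comp continuous_swap
    have hv2 : Continuous fun p : ℝ × EuclideanSpace ℝ (Fin N) => deriv (v p.2) p.1 :=
      hvdc.comp continuous_swap
    have hψ' : Continuous fun p : ℝ × EuclideanSpace ℝ (Fin N) => ψ p.2 :=
      hψ.continuous.comp continuous_snd
    have he : Continuous fun p : ℝ × EuclideanSpace ℝ (Fin N) => Real.exp (-(t - p.1) / τ) := by
      fun_prop
    exact hψ'.continuousOn.mul (((((continuousOn_const.mul hL).neg.mul he.continuousOn).add
      (hK.mul (he.continuousOn.mul continuousOn_const))).mul hv1.continuousOn).add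
      ((hK.mul he.continuousOn).mul hv2.continuousOn))
  have hG0 : ∀ s y, y ∉ tsupport ψ → G s y = 0 := fun s y hy => by
    simp [hG, image_eq_zero_of_notMem_tsupport hy]
  have hGint : Integrable (Function.uncurry G) ((volume.restrict (Ioc a b)).prod volume) := by
    have h1 : IntegrableOn (Function.uncurry G) (Icc a b ×ˢ tsupport ψ) (volume.prod volume) :=
      (hGc.mono (prod_mono_right (subset_univ _))).integrableOn_compact
        (isCompact_Icc.prod hψc)
    have h2 : IntegrableOn (Function.uncurry G) (Icc a b ×ˢ univ) (volume.prod volume) :=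
      h1.of_forall_sdiff_eq_zero (measurableSet_Icc.prod MeasurableSet.univ) fun p hp =>
        hG0 _ _ fun h' => hp.2 ⟨hp.1.1, h'⟩
    have h3 := h2.mono_set (prod_mono_left (t := univ) (Ioc_subset_Icc_self (a := a) (b := b)))
    rwa [IntegrableOn, ← Measure.prod_restrict, Measure.restrict_univ] at h3
  have hRG : ∀ s ∈ Icc a b, R s = ∫ y, G s y := fun s hs => by
    have hmul : ContDiff ℝ 2 fun y => ψ y * heatKer N d (t - s) x y := hψ.mul (hK2 s)
    have hmulc : HasCompactSupport fun y => ψ y * heatKer N d (t - s) x y := hψc.mul_right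
    have hGs : Integrable (G s) := by
      refine Continuous.integrable_of_hasCompactSupport ?_ (HasCompactSupport.intro hψc (hG0 s))
      exact hGc.comp_continuous (f := fun y => (s, y)) (by fun_prop) fun y => ⟨hs, mem_univ _⟩
    have h1 : Integrable fun y => ψ y * heatKer N d (t - s) x y * Lap (fun y => v y s) y :=
      (hmul.continuous.mul (continuous_Lap (hvx s))).integrable_of_hasCompactSupport
        hmulc.mul_right
    have h2 : Integrable fun y => Lap (fun y => ψ y * heatKer N d (t - s) x y) y * v y s :=
      ((continuous_Lap hmul).mul (hvx s).continuous).integrable_of_hasCompactSupport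
        (hasCompactSupport_Lap hmulc).mul_right
    have hgreen := integral_mul_Lap_eq (hvx s) hmul hmulc
    have hpt : ∀ y, Real.exp (-(t - s) / τ) *
      (ψ y * heatKer N d (t - s) x y * ((1 / τ) * h y s) + d * v y s *
        (heatKer N d (t - s) x y * Lap ψ y + 2 * ∑ i : Fin N,
          fderiv ℝ ψ y (EuclideanSpace.single i 1) *
            fderiv ℝ (heatKer N d (t - s) x) y (EuclideanSpace.single i 1))) =
        G s y - Real.exp (-(t - s) / τ) * d *
          (ψ y * heatKer N d (t - s) x y * Lap (fun y => v y s) y -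
            Lap (fun y => ψ y * heatKer N d (t - s) x y) y * v y s) := fun y => by
      simp only [hG]
      rw [Lap_mul hψ (hK2 s), heq]
      ring
    rw [hR]
    simp_rw [hpt]
    have h3 : Integrable fun y => ψ y * heatKer N d (t - s) x y * Lap (fun y => v y s) y -
        Lap (fun y => ψ y * heatKer N d (t - s) x y) y * v y s := h1.sub h2
    rw [integral_sub hGs (h3.const_mul _), integral_const_mul, integral_sub h1 h2,
      hgreen]
    simp
  have hderiv : ∀ y, ∀ s ∈ Icc a b, HasDerivAt (fun s => ψ y *
      (heatKer N d (t - s) x y * Real.exp (-(t - s) / τ) * v y s)) (G s y) s := fun y s hs => by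
    have hσ : 0 < t - s := by linarith [hs.2]
    have h1 : HasDerivAt (fun s => t - s) (-1) s := (hasDerivAt_id s).const_sub t
    have h2 : HasDerivAt (fun s => heatKer N d (t - s) x y)
        (-(d * Lap (heatKer N d (t - s) x) y)) s := by
      simpa [Function.comp_def] using (hasDerivAt_heatKer hd hσ x y).comp s h1
    have h3 : HasDerivAt (fun s => Real.exp (-(t - s) / τ))
        (Real.exp (-(t - s) / τ) * (1 / τ)) s := by
      simpa using (h1.neg.div_const τ).exp
    have h4 : HasDerivAt (v y) (deriv (v y) s) s :=
      ((hvt y).differentiable (by norm_num) s).hasDerivAt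
    exact ((h2.mul h3).mul h4).const_mul (ψ y)
  have hint : ∀ s, Integrable fun y => ψ y *
      (heatKer N d (t - s) x y * Real.exp (-(t - s) / τ) * v y s) := fun s =>
    (hψ.continuous.mul (((hcont s).mul continuous_const).mul
      (hvx s).continuous)).integrable_of_hasCompactSupport hψc.mul_right
  constructor
  · refine hGint.integral_prod_left.aestronglyMeasurable.congr ?_
    filter_upwards [ae_restrict_mem measurableSet_Ioc] with s hs
    exact (hRG s (Ioc_subset_Icc_self hs)).symm
  · rw [← integral_sub (hint b) (hint a)]
    have h1 : ∫ s in a..b, R s = ∫ s in a..b, ∫ y, G s y :=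
      intervalIntegral.integral_congr fun s hs => hRG s (by rwa [uIcc_of_le hab] at hs)
    rw [h1, intervalIntegral_integral_swap (by rwa [uIoc_of_le hab])]
    refine integral_congr_ae (Filter.Eventually.of_forall fun y => ?_)
    refine (intervalIntegral.integral_eq_sub_of_hasDerivAt (f := fun s => ψ y *
      (heatKer N d (t - s) x y * Real.exp (-(t - s) / τ) * v y s)) (f' := fun s => G s y)
      (fun s hs => hderiv y s (by rwa [uIcc_of_le hab] at hs)) ?_).symm
    refine ContinuousOn.intervalIntegrable ?_
    rw [uIcc_of_le hab]
    exact hGc.comp (f := fun s => (s, y)) (by fun_prop) fun s hs => ⟨hs, mem_univ _⟩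

/-- Duhamel's formula on a compact time interval for bounded solutions. -/
theorem heat_average_sub_eq {d τ t a b : ℝ} (hd : 0 < d) (hτ : 0 < τ) (hab : a ≤ b) (hbt : b < t)
    {v h : EuclideanSpace ℝ (Fin N) → ℝ → ℝ}
    (hvt : ∀ x, ContDiff ℝ 1 (v x)) (hvx : ∀ t, ContDiff ℝ 2 (fun y => v y t))
    (hvjc : Continuous (fun p : EuclideanSpace ℝ (Fin N) × ℝ => v p.1 p.2))
    (hvdc : Continuous (fun p : EuclideanSpace ℝ (Fin N) × ℝ => deriv (v p.1) p.2))
    (hhjc : Continuous (fun p : EuclideanSpace ℝ (Fin N) × ℝ => h p.1 p.2))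
    (heq : ∀ x t, deriv (v x) t = d * Lap (fun y => v y t) x + (1 / τ) * (h x t - v x t))
    {M : ℝ} (hvM : ∀ x t, |v x t| ≤ M) (hhM : ∀ x t, |h x t| ≤ M)
    (x : EuclideanSpace ℝ (Fin N)) :
    (∫ y, heatKer N d (t - b) x y * Real.exp (-(t - b) / τ) * v y b) -
      ∫ y, heatKer N d (t - a) x y * Real.exp (-(t - a) / τ) * v y a =
      ∫ s in a..b, ∫ y,
        heatKer N d (t - s) x y * ((1 / τ) * Real.exp (-(t - s) / τ)) * h y s := by
  obtain ⟨ψ, C, hC0, hψ, hψc, hψ1, hψd, hψL, hψlim⟩ := exists_cutoff_seq N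
  obtain ⟨D, hD, hDle⟩ := exists_integrable_heatKer_mul_le (β := t - a) hd (sub_pos.2 hbt)
    (by linarith) x
  have hM0 : 0 ≤ M := (abs_nonneg _).trans (hvM 0 0)
  have hK2 : ∀ s, ContDiff ℝ 2 (heatKer N d (t - s) x) := fun s => contDiff_heatKer d (t - s) x
  have hKc : ∀ s, Continuous fun y => heatKer N d (t - s) x y := fun s => (hK2 s).continuous
  have hexp : ∀ s ∈ Icc a b, Real.exp (-(t - s) / τ) ≤ 1 := fun s hs => by
    rw [Real.exp_le_one_iff]
    exact div_nonpos_of_nonpos_of_nonneg (by linarith [hs.2]) hτ.le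
  have hend : ∀ s ∈ Icc a b, Filter.Tendsto
      (fun n => ∫ y, ψ n y * (heatKer N d (t - s) x y * Real.exp (-(t - s) / τ) * v y s))
      Filter.atTop (𝓝 (∫ y, heatKer N d (t - s) x y * Real.exp (-(t - s) / τ) * v y s)) := by
    intro s hs
    have hσ : 0 < t - s := by linarith [hs.2]
    refine tendsto_integral_of_dominated_convergence
      (fun y => heatKer N d (t - s) x y * M) (fun n => ?_)
      ((integrable_heatKer hd hσ x).mul_const M) (fun n => Filter.Eventually.of_forall fun y => ?_)
      (Filter.Eventually.of_forall fun y => ?_)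
    · exact ((hψ n).continuous.mul (((hKc s).mul continuous_const).mul
        (hvx s).continuous)).aestronglyMeasurable
    · have hK0 := heatKer_nonneg hd hσ x y
      rw [norm_mul, norm_mul, norm_mul, Real.norm_of_nonneg hK0, Real.norm_of_nonneg
        (Real.exp_pos _).le, Real.norm_eq_abs, Real.norm_eq_abs]
      calc |ψ n y| * (heatKer N d (t - s) x y * Real.exp (-(t - s) / τ) * |v y s|)
          ≤ 1 * (heatKer N d (t - s) x y * 1 * M) := by
            gcongr
            exacts [hψ1 n y, hexp s hs, hvM y s]
        _ = _ := by ring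
    · refine tendsto_const_nhds.congr' ?_
      filter_upwards [hψlim y] with n hn
      rw [hn.1, one_mul]
  let Q : ℕ → ℝ → EuclideanSpace ℝ (Fin N) → ℝ := fun n s y => Real.exp (-(t - s) / τ) *
      (ψ n y * heatKer N d (t - s) x y * ((1 / τ) * h y s) + d * v y s *
        (heatKer N d (t - s) x y * Lap (ψ n) y + 2 * ∑ i : Fin N,
          fderiv ℝ (ψ n) y (EuclideanSpace.single i 1) *
            fderiv ℝ (heatKer N d (t - s) x) y (EuclideanSpace.single i 1)))
  have hloc := fun n => integral_cutoff_sub_eq (τ := τ) hd hab hbt hvt hvx hvjc hvdc heq (hψ n)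
    (hψc n) x (R := fun s => ∫ y, Q n s y) (fun s => rfl)
  let B : ℝ := M / τ + d * M * (C + N * C / (d * (t - b)))
  have hQle : ∀ n, ∀ s ∈ Icc a b, ∀ y, ‖Q n s y‖ ≤ B * D y := by
    intro n s hs y
    have hα : 0 < t - b := sub_pos.2 hbt
    have hσ : 0 < t - s := by linarith [hs.2]
    have hσα : t - b ≤ t - s := by linarith [hs.2]
    have hK0 := heatKer_nonneg hd hσ x y
    set K := heatKer N d (t - s) x y
    have hgrad : |2 * ∑ i : Fin N, fderiv ℝ (ψ n) y (EuclideanSpace.single i 1) *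
        fderiv ℝ (heatKer N d (t - s) x) y (EuclideanSpace.single i 1)| ≤
        N * C / (d * (t - b)) * (K * ‖x - y‖) := by
      rw [abs_mul, abs_two]
      have hterm : ∀ i : Fin N, |fderiv ℝ (ψ n) y (EuclideanSpace.single i 1) *
          fderiv ℝ (heatKer N d (t - s) x) y (EuclideanSpace.single i 1)| ≤
          C * (‖x - y‖ / (2 * d * (t - b)) * K) := fun i => by
        have he : ‖(EuclideanSpace.single i 1 : EuclideanSpace ℝ (Fin N))‖ = 1 := by simp
        rw [abs_mul, fderiv_heatKer_apply hd hσ, abs_mul, abs_of_nonneg hK0, abs_div,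
          abs_of_pos (by positivity : 0 < 2 * d * (t - s))]
        have h1 : |fderiv ℝ (ψ n) y (EuclideanSpace.single i 1)| ≤ C := by
          refine ((fderiv ℝ (ψ n) y).le_opNorm _).trans ?_
          rw [he, mul_one]
          exact hψd n y
        have h2 : |inner ℝ (x - y) (EuclideanSpace.single i 1 : EuclideanSpace ℝ (Fin N))| ≤
            ‖x - y‖ := by
          refine (abs_real_inner_le_norm _ _).trans ?_
          rw [he, mul_one]
        gcongr
      calc 2 * |∑ i : Fin N, fderiv ℝ (ψ n) y (EuclideanSpace.single i 1) *
            fderiv ℝ (heatKer N d (t - s) x) y (EuclideanSpace.single i 1)|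
          ≤ 2 * ∑ i : Fin N, C * (‖x - y‖ / (2 * d * (t - b)) * K) := by
            gcongr
            exact (Finset.abs_sum_le_sum_abs _ _).trans (Finset.sum_le_sum fun i _ => hterm i)
        _ = _ := by
          rw [Finset.sum_const, Finset.card_univ, Fintype.card_fin, nsmul_eq_mul]
          field_simp
    have hKle : K ≤ K * (1 + ‖x - y‖) := by nlinarith [mul_nonneg hK0 (norm_nonneg (x - y))]
    have hKle' : K * ‖x - y‖ ≤ K * (1 + ‖x - y‖) := by linarith
    rw [Real.norm_eq_abs, abs_mul, Real.abs_exp]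
    have hB0 : 0 ≤ B := by positivity
    calc Real.exp (-(t - s) / τ) * |ψ n y * K * ((1 / τ) * h y s) + d * v y s *
            (K * Lap (ψ n) y + 2 * ∑ i : Fin N, fderiv ℝ (ψ n) y (EuclideanSpace.single i 1) *
            fderiv ℝ (heatKer N d (t - s) x) y (EuclideanSpace.single i 1))|
        ≤ 1 * (|ψ n y * K * ((1 / τ) * h y s)| + |d * v y s *
            (K * Lap (ψ n) y + 2 * ∑ i : Fin N, fderiv ℝ (ψ n) y (EuclideanSpace.single i 1) *
            fderiv ℝ (heatKer N d (t - s) x) y (EuclideanSpace.single i 1))|) := by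
          gcongr
          exacts [hexp s hs, abs_add_le _ _]
      _ ≤ 1 * (1 * K * (1 / τ * M) + d * M * (K * C + N * C / (d * (t - b)) * (K * ‖x - y‖))) := by
          simp only [abs_mul, abs_of_nonneg hK0, abs_of_pos hd, abs_of_pos (one_div_pos.2 hτ)]
          gcongr
          · exact hψ1 n y
          · exact hhM y s
          · exact hvM y s
          · refine (abs_add_le _ _).trans (add_le_add ?_ hgrad)
            rw [abs_mul, abs_of_nonneg hK0]
            exact mul_le_mul_of_nonneg_left (hψL n y) hK0
      _ ≤ 1 * (1 * (K * (1 + ‖x - y‖)) * (1 / τ * M) + d * M * ((K * (1 + ‖x - y‖)) * C +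
            N * C / (d * (t - b)) * (K * (1 + ‖x - y‖)))) := by gcongr
      _ = B * (K * (1 + ‖x - y‖)) := by
          simp only [B]
          ring
      _ ≤ B * D y := by
          gcongr
          exact hDle _ ⟨hσα, by linarith [hs.1]⟩ y
  have hQc : ∀ n, ∀ s ∈ Icc a b, Continuous (Q n s) := by
    intro n s hs
    refine continuous_const.mul ((((hψ n).continuous.mul (hKc s)).mul (continuous_const.mul
      (hhjc.comp (f := fun y => (y, s)) (by fun_prop)))).add
      ((continuous_const.mul (hvx s).continuous).mul (((hKc s).mul (continuous_Lap (hψ n))).add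
      (continuous_const.mul (continuous_finsetSum _ fun i _ => ?_)))))
    exact ((hψ n).fderiv_apply_const _).continuous.mul ((hK2 s).fderiv_apply_const _).continuous
  have hright : Filter.Tendsto (fun n => ∫ s in a..b, ∫ y, Q n s y) Filter.atTop
      (𝓝 (∫ s in a..b, ∫ y,
        heatKer N d (t - s) x y * ((1 / τ) * Real.exp (-(t - s) / τ)) * h y s)) := by
    refine intervalIntegral.tendsto_integral_filter_of_dominated_convergence
      (fun _ => ∫ y, B * D y) (Filter.Eventually.of_forall fun n => ?_)
      (Filter.Eventually.of_forall fun n => Filter.Eventually.of_forall fun s hs => ?_)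
      intervalIntegrable_const (Filter.Eventually.of_forall fun s hs => ?_)
    · rw [uIoc_of_le hab]
      exact (hloc n).1
    · rw [uIoc_of_le hab] at hs
      exact norm_integral_le_of_norm_le (hD.const_mul B)
        (Filter.Eventually.of_forall (hQle n s (Ioc_subset_Icc_self hs)))
    · rw [uIoc_of_le hab] at hs
      have hs' := Ioc_subset_Icc_self hs
      refine tendsto_integral_of_dominated_convergence (fun y => B * D y)
        (fun n => (hQc n s hs').aestronglyMeasurable) (hD.const_mul B)
        (fun n => Filter.Eventually.of_forall (hQle n s hs'))
        (Filter.Eventually.of_forall fun y => tendsto_const_nhds.congr' ?_)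
      filter_upwards [hψlim y] with n hn
      simp only [Q, hn.1, hn.2.1, hn.2.2]
      simp
      ring
  refine tendsto_nhds_unique (((hend b ⟨hab, le_rfl⟩).sub (hend a ⟨le_rfl, hab⟩))) ?_
  simp_rw [fun n => (hloc n).2]
  exact hright

/-- A bounded entire solution of `∂ₜv = dΔv + (h - v)/τ` is the spatiotemporal convolution of `h`
with the heat kernel and the weak delay kernel. -/
theorem eq_weak_kernel_convolution {d τ : ℝ} (hd : 0 < d) (hτ : 0 < τ)
    {v h : EuclideanSpace ℝ (Fin N) → ℝ → ℝ}
    (hvt : ∀ x, ContDiff ℝ 1 (v x)) (hvx : ∀ t, ContDiff ℝ 2 (fun y => v y t))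
    (hvjc : Continuous (fun p : EuclideanSpace ℝ (Fin N) × ℝ => v p.1 p.2))
    (hvdc : Continuous (fun p : EuclideanSpace ℝ (Fin N) × ℝ => deriv (v p.1) p.2))
    (hhjc : Continuous (fun p : EuclideanSpace ℝ (Fin N) × ℝ => h p.1 p.2))
    (heq : ∀ x t, deriv (v x) t = d * Lap (fun y => v y t) x + (1 / τ) * (h x t - v x t))
    {M : ℝ} (hvM : ∀ x t, |v x t| ≤ M) (hhM : ∀ x t, |h x t| ≤ M)
    (x : EuclideanSpace ℝ (Fin N)) (t : ℝ) :
    v x t = ∫ s in Iio t, ∫ y,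
      heatKer N d (t - s) x y * ((1 / τ) * Real.exp (-(t - s) / τ)) * h y s := by
  have hM0 : 0 ≤ M := (abs_nonneg _).trans (hvM 0 0)
  let P : (EuclideanSpace ℝ (Fin N) → ℝ → ℝ) → ℝ → ℝ :=
    fun f s => ∫ z, heatKer N d 1 0 z * f (x + √(t - s) • z) s
  have hPv : Continuous (P v) := continuous_integral_heatKer_mul hd x t hvjc hvM
  have hPh : Continuous (P h) := continuous_integral_heatKer_mul hd x t hhjc hhM
  have hPvM : ∀ s, |P v s| ≤ M := fun s => abs_integral_heatKer_mul_le hd fun z => hvM _ _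
  have hPhM : ∀ s, |P h s| ≤ M := fun s => abs_integral_heatKer_mul_le hd fun z => hhM _ _
  have hPvt : P v t = v x t := by
    simp [P, integral_mul_const, integral_heatKer hd one_pos]
  have hconv : ∀ (c : ℝ) (f : EuclideanSpace ℝ (Fin N) → ℝ → ℝ), ∀ s < t,
      ∫ y, heatKer N d (t - s) x y * c * f y s = c * P f s := fun c f s hs => by
    simp only [P]
    rw [← integral_heatKer_mul hd (sub_pos.2 hs) x (fun y => f y s), ← integral_const_mul]
    refine integral_congr_ae (Filter.Eventually.of_forall fun y => ?_)
    simp only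
    ring
  let g : ℝ → ℝ := fun s => (1 / τ) * Real.exp (-(t - s) / τ) * P h s
  have hgc : Continuous g := by fun_prop
  have hcompact : ∀ a b, a ≤ b → b < t → Real.exp (-(t - b) / τ) * P v b -
      Real.exp (-(t - a) / τ) * P v a = ∫ s in a..b, g s := fun a b hab hbt => by
    have := heat_average_sub_eq hd hτ hab hbt hvt hvx hvjc hvdc hhjc heq hvM hhM x
    rw [hconv _ v b hbt, hconv _ v a (hab.trans_lt hbt)] at this
    rw [this]
    refine intervalIntegral.integral_congr fun s hs => ?_
    rw [uIcc_of_le hab] at hs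
    exact hconv _ h s (hs.2.trans_lt hbt)
  have hupto : ∀ a < t, v x t - Real.exp (-(t - a) / τ) * P v a = ∫ s in a..t, g s := by
    intro a hat
    have hl : Continuous fun b => Real.exp (-(t - b) / τ) * P v b -
        Real.exp (-(t - a) / τ) * P v a := by fun_prop
    have hr : Continuous fun b => ∫ s in a..b, g s :=
      intervalIntegral.continuous_primitive (fun _ _ => hgc.intervalIntegrable _ _) a
    have hev : (fun b => Real.exp (-(t - b) / τ) * P v b - Real.exp (-(t - a) / τ) * P v a)
        =ᶠ[𝓝[<] t] fun b => ∫ s in a..b, g s := by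
      filter_upwards [Ioo_mem_nhdsLT hat] with b hb
      exact hcompact a b hb.1.le hb.2
    have hlim := tendsto_nhds_unique
      ((hl.tendsto t).mono_left nhdsWithin_le_nhds)
      (((hr.tendsto t).mono_left nhdsWithin_le_nhds).congr' hev.symm)
    simpa [hPvt] using hlim
  have hexp : ∀ s, Real.exp (-(t - s) / τ) = Real.exp (-t / τ) * Real.exp (τ⁻¹ * s) := fun s => by
    rw [← Real.exp_add]
    congr 1
    field_simp
    ring
  have hgint : IntegrableOn g (Iic t) := by
    refine Integrable.mono' (((integrableOn_exp_mul_Iic (inv_pos.2 hτ) t).const_mul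
      (1 / τ * Real.exp (-t / τ) * M))) hgc.aestronglyMeasurable
      (Filter.Eventually.of_forall fun s => ?_)
    simp only [g, norm_mul, Real.norm_eq_abs, Real.abs_exp, abs_of_pos (one_div_pos.2 hτ)]
    calc 1 / τ * Real.exp (-(t - s) / τ) * |P h s| ≤ 1 / τ * Real.exp (-(t - s) / τ) * M := by
          gcongr
          exact hPhM s
      _ = _ := by
          rw [hexp]
          ring
  have hdecay : Filter.Tendsto (fun a => Real.exp (-(t - a) / τ) * P v a) Filter.atBot (𝓝 0) := by
    have h1 : Filter.Tendsto (fun a => Real.exp (-t / τ) * Real.exp (τ⁻¹ * a) * M) Filter.atBot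
        (𝓝 0) := by
      have := Real.tendsto_exp_atBot.comp (Filter.tendsto_id.const_mul_atBot (inv_pos.2 hτ))
      simpa using (this.const_mul (Real.exp (-t / τ))).mul_const M
    refine squeeze_zero_norm (fun a => ?_) h1
    rw [norm_mul, Real.norm_eq_abs, Real.norm_eq_abs, Real.abs_exp, hexp]
    gcongr
    exact hPvM a
  have hlim : ∫ s in Iic t, g s = v x t := by
    refine tendsto_nhds_unique
      (intervalIntegral_tendsto_integral_Iic t hgint Filter.tendsto_id) ?_
    have h2 := (tendsto_const_nhds (x := v x t)).sub hdecay
    rw [sub_zero] at h2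
    refine h2.congr' ?_
    filter_upwards [Filter.eventually_lt_atBot t] with a ha
    exact hupto a ha
  rw [← hlim, integral_Iic_eq_integral_Iio]
  refine setIntegral_congr_fun measurableSet_Iio fun s hs => ?_
  exact (hconv _ h s hs).symm

end HeatKernel

/-- an entire bounded solution of the two-component reaction-diffusion
system on ℝᴺ gives rise to an entire solution of the nonlocal delay equation with the
weak kernel g_w(t) = (1/τ)e^{−t/τ}: v is the spatiotemporal convolution g_w ∗∗ H(u),
and hence ∂ₜu = dΔu + F(u, g_w ∗∗ H(u)). -/
theorem stmt19 (N : ℕ) (hN : 1 ≤ N) (d τ : ℝ) (hd : 0 < d) (hτ : 0 < τ)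
    (F : ℝ → ℝ → ℝ) (H : ℝ → ℝ)
    (hFc : Continuous (Function.uncurry F)) (hHc : Continuous H)
    (u v : EuclideanSpace ℝ (Fin N) → ℝ → ℝ)
    -- regularity: C¹ in time, C² in space, with jointly continuous derivatives
    (hut : ∀ x, ContDiff ℝ 1 (u x)) (hvt : ∀ x, ContDiff ℝ 1 (v x))
    (hux : ∀ t, ContDiff ℝ 2 (fun y => u y t)) (hvx : ∀ t, ContDiff ℝ 2 (fun y => v y t))
    (hujc : Continuous (fun p : EuclideanSpace ℝ (Fin N) × ℝ => u p.1 p.2))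
    (hvjc : Continuous (fun p : EuclideanSpace ℝ (Fin N) × ℝ => v p.1 p.2))
    (hudc : Continuous (fun p : EuclideanSpace ℝ (Fin N) × ℝ => deriv (u p.1) p.2))
    (hvdc : Continuous (fun p : EuclideanSpace ℝ (Fin N) × ℝ => deriv (v p.1) p.2))
    (hulc : Continuous (fun p : EuclideanSpace ℝ (Fin N) × ℝ => Lap (fun y => u y p.2) p.1))
    (hvlc : Continuous (fun p : EuclideanSpace ℝ (Fin N) × ℝ => Lap (fun y => v y p.2) p.1))
    -- boundedness of v and of H ∘ u
    (hvb : ∃ C : ℝ, ∀ x t, |v x t| ≤ C)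
    (hHub : ∃ C : ℝ, ∀ x t, |H (u x t)| ≤ C)
    -- the reaction-diffusion system, for all (x, t) ∈ ℝᴺ × ℝ
    (heq1 : ∀ x t, deriv (u x) t = d * Lap (fun y => u y t) x + F (u x t) (v x t))
    (heq2 : ∀ x t, deriv (v x) t
      = d * Lap (fun y => v y t) x + (1 / τ) * (H (u x t) - v x t)) :
    -- conclusion: v = g_w ∗∗ H(u), and u solves the nonlocal delay equation
    (∀ x t, v x t = ∫ s in Iio t, ∫ y,
        heatKer N d (t - s) x y * ((1 / τ) * Real.exp (-(t - s) / τ)) * H (u y s)) ∧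
    (∀ x t, deriv (u x) t = d * Lap (fun y => u y t) x +
        F (u x t) (∫ s in Iio t, ∫ y,
          heatKer N d (t - s) x y * ((1 / τ) * Real.exp (-(t - s) / τ)) * H (u y s))) := by
  obtain ⟨C₁, hC₁⟩ := hvb
  obtain ⟨C₂, hC₂⟩ := hHub
  have key := eq_weak_kernel_convolution hd hτ (h := fun y s => H (u y s)) hvt hvx hvjc hvdc
    (hHc.comp hujc) heq2 (M := max C₁ C₂) (fun x t => (hC₁ x t).trans (le_max_left _ _))
    (fun x t => (hC₂ x t).trans (le_max_right _ _))
  exact ⟨key, fun x t => by rw [← key x t]; exact heq1 x t⟩
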